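/- Every Bernstein-orientable graph G is UFP: it admits a recoverable configuration C = (R,B) in which both the red oriented graph R and the blue oriented graph B have maximum out-degree at most 1. -/

import Mathlib

/-!
Split every vertex into an out-copy and an in-copy and let each arc join the out-copy of its tail to
the in-copy of its head. Cycles of this bipartite graph are alternating closed trails, so for a
Bernstein orientation `D` it is a forest. Two consequences follow by looking at leaves: a subset of
`D` is determined by its degrees, and `D` splits into a part `P` of out-degrees at most one and a
part `Q` of in-degrees at most one.

Two orientations of a graph with equal degrees differ by reversing a set of arcs that is balanced at
every vertex, hence empty when one of the orientations is acyclic. So every configuration whose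
union is `D` is recoverable, in particular `(P, Q)`. Reversing the blue arcs is an involution on
configurations that preserves recoverability, and it turns the in-degrees of `Q` into out-degrees.
-/

variable {α : Type*}

/-- An oriented graph: a finite set of arcs with no loops and at most one
arc between any pair of vertices. -/
def Oriented (D : Finset (α × α)) : Prop :=
  ∀ a ∈ D, a.1 ≠ a.2 ∧ (a.2, a.1) ∉ D

/-- Out-degree of a vertex in a finite digraph. -/
def outDeg [DecidableEq α] (D : Finset (α × α)) (v : α) : ℕ :=
  (D.filter fun a => a.1 = v).card

/-- In-degree of a vertex in a finite digraph. -/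
def inDeg [DecidableEq α] (D : Finset (α × α)) (v : α) : ℕ :=
  (D.filter fun a => a.2 = v).card

/-- A digraph has a directed cycle iff some vertex reaches itself by a
nonempty directed walk. -/
def HasDirCycle (D : Finset (α × α)) : Prop :=
  ∃ v : α, Relation.TransGen (fun a b => (a, b) ∈ D) v v

/-- Two arcs have the same direction with respect to a shared vertex `v`:
both leave `v` or both enter `v`. -/
def SameDir (e f : α × α) (v : α) : Prop :=
  (e.1 = v ∧ f.1 = v) ∨ (e.2 = v ∧ f.2 = v)

/-- An alternating closed trail: a cyclic sequence of `2m` distinct arcs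
`e 0, e 1, …` (indices mod `2m`) such that consecutive arcs share a vertex
`v i` at which they have the same direction, with `v i ≠ v (i+1)`. -/
def HasAltTrail (D : Finset (α × α)) : Prop :=
  ∃ m : ℕ, 0 < m ∧ ∃ (e : ZMod (2 * m) → α × α) (v : ZMod (2 * m) → α),
    Function.Injective e ∧ (∀ i, e i ∈ D) ∧
    (∀ i, SameDir (e i) (e (i + 1)) (v i)) ∧ (∀ i, v i ≠ v (i + 1))

/-- A Bernstein oriented graph: no directed cycles and no alternating
closed trails. -/
def Bernstein (D : Finset (α × α)) : Prop :=
  Oriented D ∧ ¬ HasDirCycle D ∧ ¬ HasAltTrail D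

/-- `D` is an orientation of the simple graph `G`: every arc of `D` is an
edge of `G`, and every edge of `G` carries exactly one of the two possible
arcs. -/
def IsOrientation (G : SimpleGraph α) (D : Finset (α × α)) : Prop :=
  (∀ a ∈ D, G.Adj a.1 a.2) ∧ ∀ x y : α, G.Adj x y → ((x, y) ∈ D ↔ (y, x) ∉ D)

section Graph

open SimpleGraph

variable {V : Type*} {G : SimpleGraph V}

theorem exists_existsUnique_adj_of_isAcyclic [Finite G.edgeSet] (hG : G.IsAcyclic) (hne : G ≠ ⊥) :
    ∃ u, ∃! v, G.Adj u v := by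
  obtain ⟨x, y, hxy⟩ := ne_bot_iff_exists_adj.1 hne
  have : Nonempty V := ⟨x⟩
  obtain ⟨u, v, p, hp, hmax⟩ := Walk.exists_isPath_forall_isPath_length_le_length G
  have hnil : ¬ p.Nil := fun h => by
    have hlen := hmax x y hxy.toWalk (by simp [hxy.ne])
    simp [Walk.length_eq_zero_iff.2 h] at hlen
  -- A second neighbour of the end `u` of a longest path would close a cycle or extend the path.
  refine ⟨u, p.snd, p.adj_snd hnil, fun w hw => hG.eq_snd_of_adj_start hp hw ?_⟩
  by_contra hwp
  have hlen := hmax _ _ _ (hp.cons (h := hw.symm) hwp)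
  simp at hlen

theorem exists_zmod_cycle_of_cycleGraph_isContained {n : ℕ} (hn : 2 ≤ n)
    (hG : (cycleGraph n).IsContained G) :
    ∃ u : ZMod n → V, Function.Injective u ∧ ∀ i, G.Adj (u i) (u (i + 1)) := by
  obtain ⟨k, rfl⟩ := Nat.exists_eq_add_of_le' hn
  obtain ⟨f⟩ := hG
  exact ⟨f, f.injective, fun i =>
    f.toHom.map_adj (cycleGraph_adj.2 (Or.inr (add_sub_cancel_left (i : Fin _) 1)))⟩

theorem exists_zmod_cycle_of_not_isAcyclic (hG : ¬ G.IsAcyclic)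
    (hcol : G.Colorable 2) :
    ∃ m, 1 < m ∧ ∃ u : ZMod (2 * m) → V, Function.Injective u ∧ ∀ i, G.Adj (u i) (u (i + 1)) := by
  simp only [IsAcyclic, not_forall, not_not] at hG
  obtain ⟨x, p, hp⟩ := hG
  obtain ⟨m, hm⟩ := (two_colorable_iff_forall_loop_even.1 hcol x p).two_dvd
  have hlen := hp.three_le_length
  exact ⟨m, by lia, exists_zmod_cycle_of_cycleGraph_isContained (by lia)
    ((cycleGraph_isContained_iff (by lia)).2 ⟨x, p, hp, hm⟩)⟩

theorem injective_sym2_mk_add_one {n : ℕ} (hn : 2 < n) {u : ZMod n → V}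
    (hu : Function.Injective u) : Function.Injective fun i => s(u i, u (i + 1)) := by
  intro i j hij
  rcases Sym2.eq_iff.1 hij with ⟨h, -⟩ | ⟨h₁, h₂⟩
  · exact hu h
  · have htwo : ((2 : ℕ) : ZMod n) = 0 := by
      push_cast
      linear_combination hu h₂ - hu h₁
    exact absurd (Nat.le_of_dvd two_pos ((ZMod.natCast_eq_zero_iff 2 n).1 htwo)) (by lia)

end Graph

section DoubleCover

/-- The edge of the bipartite double cover contributed by an arc: it joins the copy `inl` of the
tail to the copy `inr` of the head. -/
def doubleCoverEdge (e : α × α) : Sym2 (α ⊕ α) :=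
  s(.inl e.1, .inr e.2)

/-- The bipartite double cover of a digraph. Its vertices are an out-copy `inl v` and an in-copy
`inr v` of every vertex `v`, so that two arcs have the same direction at `v` exactly when their
edges share a copy of `v`; its cycles encode alternating closed trails. -/
def doubleCover (D : Finset (α × α)) : SimpleGraph (α ⊕ α) :=
  SimpleGraph.fromEdgeSet (doubleCoverEdge '' D)

theorem inl_mem_doubleCoverEdge {v : α} {e : α × α} : .inl v ∈ doubleCoverEdge e ↔ e.1 = v := by
  simp [doubleCoverEdge, eq_comm]

theorem inr_mem_doubleCoverEdge {v : α} {e : α × α} : .inr v ∈ doubleCoverEdge e ↔ e.2 = v := by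
  simp [doubleCoverEdge, eq_comm]

theorem sameDir_of_mem_doubleCoverEdge {e f : α × α} {x : α ⊕ α} (he : x ∈ doubleCoverEdge e)
    (hf : x ∈ doubleCoverEdge f) : SameDir e f (x.elim id id) := by
  rcases x with v | v
  · exact Or.inl ⟨inl_mem_doubleCoverEdge.1 he, inl_mem_doubleCoverEdge.1 hf⟩
  · exact Or.inr ⟨inr_mem_doubleCoverEdge.1 he, inr_mem_doubleCoverEdge.1 hf⟩

theorem doubleCover_adj {D : Finset (α × α)} {x y : α ⊕ α} :
    (doubleCover D).Adj x y ↔ ∃ e ∈ D, doubleCoverEdge e = s(x, y) := by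
  rw [doubleCover, SimpleGraph.fromEdgeSet_adj, and_iff_left_of_imp]
  · rfl
  · rintro ⟨e, -, he⟩ rfl
    rcases x with v | v <;> simp [doubleCoverEdge] at he

theorem doubleCover_adj_inl_inr {D : Finset (α × α)} {v w : α} :
    (doubleCover D).Adj (.inl v) (.inr w) ↔ (v, w) ∈ D := by
  simp [doubleCover_adj, doubleCoverEdge]

theorem doubleCover_mono {F D : Finset (α × α)} (hFD : F ⊆ D) : doubleCover F ≤ doubleCover D :=
  SimpleGraph.fromEdgeSet_mono (Set.image_mono hFD)

theorem finite_edgeSet_doubleCover (D : Finset (α × α)) : (doubleCover D).edgeSet.Finite := by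
  rw [doubleCover, SimpleGraph.edgeSet_fromEdgeSet]
  exact (D.finite_toSet.image _).sdiff

theorem colorable_two_doubleCover (D : Finset (α × α)) : (doubleCover D).Colorable 2 := by
  refine SimpleGraph.Coloring.colorable (α := Bool) (SimpleGraph.Coloring.mk Sum.isLeft ?_)
  rintro (v | v) (w | w) h <;> simp_all [doubleCover_adj, doubleCoverEdge]

theorem hasAltTrail_of_not_isAcyclic_doubleCover {D : Finset (α × α)}
    (hloop : ∀ e ∈ D, e.1 ≠ e.2) (hD : ¬ (doubleCover D).IsAcyclic) : HasAltTrail D := by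
  obtain ⟨m, hm, u, hu, hadj⟩ :=
    exists_zmod_cycle_of_not_isAcyclic hD (colorable_two_doubleCover D)
  choose e heD he using fun i => doubleCover_adj.1 (hadj i)
  refine ⟨m, by lia, e, fun i => (u (i + 1)).elim id id, fun i j hij => ?_, heD, fun i => ?_,
    fun i h => ?_⟩
  · exact injective_sym2_mk_add_one (by lia) hu (by simp only [← he, hij])
  · apply sameDir_of_mem_doubleCoverEdge <;> simp [he]
  · refine hloop _ (heD (i + 1)) ?_
    rcases Sym2.eq_iff.1 (he (i + 1)) with ⟨h₁, h₂⟩ | ⟨h₁, h₂⟩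
    · simpa [← h₁, ← h₂] using h
    · simpa [← h₁, ← h₂] using h.symm

theorem Bernstein.isAcyclic_doubleCover {D : Finset (α × α)} (hD : Bernstein D) :
    (doubleCover D).IsAcyclic :=
  of_not_not fun h =>
    hD.2.2 (hasAltTrail_of_not_isAcyclic_doubleCover (fun e he => (hD.1 e he).1) h)

theorem exists_unique_fst_or_unique_snd_of_isAcyclic_doubleCover {F : Finset (α × α)}
    (hF : (doubleCover F).IsAcyclic) (hne : F.Nonempty) :
    ∃ e ∈ F, (∀ f ∈ F, f.1 = e.1 → f = e) ∨ (∀ f ∈ F, f.2 = e.2 → f = e) := by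
  have : Finite (doubleCover F).edgeSet := finite_edgeSet_doubleCover F
  obtain ⟨a, ha⟩ := hne
  have hbot : doubleCover F ≠ ⊥ :=
    SimpleGraph.ne_bot_iff_exists_adj.2 ⟨_, _, doubleCover_adj_inl_inr.2 ha⟩
  obtain ⟨x, y, hxy, huniq⟩ := exists_existsUnique_adj_of_isAcyclic hF hbot
  obtain ⟨e, he, hexy⟩ := doubleCover_adj.1 hxy
  refine ⟨e, he, ?_⟩
  rcases Sym2.eq_iff.1 hexy with ⟨rfl, rfl⟩ | ⟨rfl, rfl⟩
  · refine Or.inl fun f hf hfe => Prod.ext hfe (Sum.inr_injective (huniq (.inr f.2) ?_))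
    exact doubleCover_adj_inl_inr.2 (hfe ▸ hf)
  · refine Or.inr fun f hf hfe => Prod.ext (Sum.inl_injective (huniq (.inl f.1) ?_)) hfe
    exact (doubleCover_adj_inl_inr.2 (hfe ▸ hf)).symm

end DoubleCover

section Degrees

variable [DecidableEq α] {D S T S' T' : Finset (α × α)} {v : α}

theorem outDeg_pos : 0 < outDeg D v ↔ ∃ a ∈ D, a.1 = v := by
  simp only [outDeg, Finset.card_pos, Finset.filter_nonempty_iff]

theorem inDeg_pos : 0 < inDeg D v ↔ ∃ a ∈ D, a.2 = v := by
  simp only [inDeg, Finset.card_pos, Finset.filter_nonempty_iff]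

theorem outDeg_le_one_of_injOn_fst (hD : (D : Set (α × α)).InjOn Prod.fst) (v : α) :
    outDeg D v ≤ 1 := by
  refine Finset.card_le_one.2 fun a ha b hb => ?_
  rw [Finset.mem_filter] at ha hb
  exact hD ha.1 hb.1 (ha.2.trans hb.2.symm)

theorem inDeg_le_one_of_injOn_snd (hD : (D : Set (α × α)).InjOn Prod.snd) (v : α) :
    inDeg D v ≤ 1 := by
  refine Finset.card_le_one.2 fun a ha b hb => ?_
  rw [Finset.mem_filter] at ha hb
  exact hD ha.1 hb.1 (ha.2.trans hb.2.symm)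

theorem outDeg_union (h : Disjoint S T) : outDeg (S ∪ T) v = outDeg S v + outDeg T v := by
  rw [outDeg, Finset.filter_union, Finset.card_union_of_disjoint (Finset.disjoint_filter_filter h)]
  rfl

theorem inDeg_union (h : Disjoint S T) : inDeg (S ∪ T) v = inDeg S v + inDeg T v := by
  rw [inDeg, Finset.filter_union, Finset.card_union_of_disjoint (Finset.disjoint_filter_filter h)]
  rfl

/-- Two digraphs have the same degree function: every vertex has the same out-degree and the same
in-degree in both. -/
structure SameDegrees (S T : Finset (α × α)) : Prop where
  outDeg_eq : ∀ v, outDeg S v = outDeg T v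
  inDeg_eq : ∀ v, inDeg S v = inDeg T v

namespace SameDegrees

theorem union (h : SameDegrees S T) (h' : SameDegrees S' T') (hS : Disjoint S S')
    (hT : Disjoint T T') : SameDegrees (S ∪ S') (T ∪ T') where
  outDeg_eq v := by rw [outDeg_union hS, outDeg_union hT, h.outDeg_eq, h'.outDeg_eq]
  inDeg_eq v := by rw [inDeg_union hS, inDeg_union hT, h.inDeg_eq, h'.inDeg_eq]

theorem symm (h : SameDegrees S T) : SameDegrees T S :=
  ⟨fun v => (h.outDeg_eq v).symm, fun v => (h.inDeg_eq v).symm⟩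

theorem sdiff (h : SameDegrees S T) : SameDegrees (S \ T) (T \ S) where
  outDeg_eq v := by
    have hv : outDeg (S ∪ T \ S) v = outDeg (T ∪ S \ T) v := by rw [Finset.union_sdiff_symm]
    rw [outDeg_union Finset.disjoint_sdiff, outDeg_union Finset.disjoint_sdiff, h.outDeg_eq] at hv
    exact (Nat.add_left_cancel hv).symm
  inDeg_eq v := by
    have hv : inDeg (S ∪ T \ S) v = inDeg (T ∪ S \ T) v := by rw [Finset.union_sdiff_symm]
    rw [inDeg_union Finset.disjoint_sdiff, inDeg_union Finset.disjoint_sdiff, h.inDeg_eq] at hv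
    exact (Nat.add_left_cancel hv).symm

theorem exists_fst_eq (h : SameDegrees S T) {a : α × α} (ha : a ∈ S) : ∃ b ∈ T, b.1 = a.1 :=
  outDeg_pos.1 (h.outDeg_eq a.1 ▸ outDeg_pos.2 ⟨a, ha, rfl⟩)

theorem exists_snd_eq (h : SameDegrees S T) {a : α × α} (ha : a ∈ S) : ∃ b ∈ T, b.2 = a.2 :=
  inDeg_pos.1 (h.inDeg_eq a.2 ▸ inDeg_pos.2 ⟨a, ha, rfl⟩)

end SameDegrees

end Degrees

section Reverse

/-- The digraph obtained from `D` by reversing every arc. -/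
def reverse (D : Finset (α × α)) : Finset (α × α) :=
  D.map (Equiv.prodComm α α).toEmbedding

variable {D : Finset (α × α)}

theorem mem_reverse {a : α × α} : a ∈ reverse D ↔ a.swap ∈ D :=
  Finset.mem_map_equiv

theorem reverse_reverse (D : Finset (α × α)) : reverse (reverse D) = D := by
  ext a
  rw [mem_reverse, mem_reverse, Prod.swap_swap]

variable [DecidableEq α]

theorem outDeg_reverse (D : Finset (α × α)) (v : α) : outDeg (reverse D) v = inDeg D v := by
  rw [outDeg, reverse, Finset.filter_map, Finset.card_map]
  rfl

theorem inDeg_reverse (D : Finset (α × α)) (v : α) : inDeg (reverse D) v = outDeg D v := by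
  rw [← outDeg_reverse, reverse_reverse]

theorem SameDegrees.reverse {S T : Finset (α × α)} (h : SameDegrees S T) :
    SameDegrees (reverse S) (reverse T) where
  outDeg_eq v := by rw [outDeg_reverse, outDeg_reverse, h.inDeg_eq]
  inDeg_eq v := by rw [inDeg_reverse, inDeg_reverse, h.outDeg_eq]

end Reverse

section Forest

variable [DecidableEq α]

theorem SameDegrees.union_eq_empty_of_disjoint {S T : Finset (α × α)} (h : SameDegrees S T)
    (hST : Disjoint S T) (hF : (doubleCover (S ∪ T)).IsAcyclic) : S ∪ T = ∅ := by
  by_contra hne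
  obtain ⟨e, he, hdet⟩ :=
    exists_unique_fst_or_unique_snd_of_isAcyclic_doubleCover hF (Finset.nonempty_iff_ne_empty.2 hne)
  wlog heS : e ∈ S generalizing S T
  · rw [Finset.union_comm] at hF hne he hdet
    exact this h.symm hST.symm hF hne he hdet ((Finset.mem_union.1 he).resolve_right heS)
  rcases hdet with htail | hhead
  · obtain ⟨f, hfT, hfe⟩ := h.exists_fst_eq heS
    have hf := htail f (Finset.mem_union_right S hfT) hfe
    exact Finset.disjoint_left.1 hST heS (hf ▸ hfT)
  · obtain ⟨f, hfT, hfe⟩ := h.exists_snd_eq heS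
    have hf := hhead f (Finset.mem_union_right S hfT) hfe
    exact Finset.disjoint_left.1 hST heS (hf ▸ hfT)

theorem SameDegrees.eq_of_subset {D S T : Finset (α × α)} (h : SameDegrees S T)
    (hD : (doubleCover D).IsAcyclic) (hSD : S ⊆ D) (hTD : T ⊆ D) : S = T := by
  have hsub : S \ T ∪ T \ S ⊆ D :=
    Finset.union_subset (Finset.sdiff_subset.trans hSD) (Finset.sdiff_subset.trans hTD)
  have hempty := h.sdiff.union_eq_empty_of_disjoint disjoint_sdiff_sdiff
    (hD.anti (doubleCover_mono hsub))
  rw [Finset.union_eq_empty, Finset.sdiff_eq_empty_iff_subset,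
    Finset.sdiff_eq_empty_iff_subset] at hempty
  exact hempty.1.antisymm hempty.2

theorem exists_union_eq_injOn_fst_injOn_snd {F : Finset (α × α)}
    (hF : (doubleCover F).IsAcyclic) :
    ∃ P Q : Finset (α × α), P ∪ Q = F ∧ Disjoint P Q ∧
      (P : Set (α × α)).InjOn Prod.fst ∧ (Q : Set (α × α)).InjOn Prod.snd := by
  induction F using Finset.strongInduction with
  | H F ih =>
  rcases F.eq_empty_or_nonempty with rfl | hne
  · exact ⟨∅, ∅, by simp⟩
  obtain ⟨e, he, hdet⟩ := exists_unique_fst_or_unique_snd_of_isAcyclic_doubleCover hF hne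
  obtain ⟨P, Q, hPQ, hdisj, hP, hQ⟩ :=
    ih (F.erase e) (Finset.erase_ssubset he) (hF.anti (doubleCover_mono (F.erase_subset e)))
  obtain ⟨hPF, hQF⟩ := Finset.union_subset_iff.1 hPQ.subset
  have heP : e ∉ P := fun h => F.notMem_erase e (hPF h)
  have heQ : e ∉ Q := fun h => F.notMem_erase e (hQF h)
  rcases hdet with htail | hhead
  · refine ⟨insert e P, Q, ?_, Finset.disjoint_insert_left.2 ⟨heQ, hdisj⟩, ?_, hQ⟩
    · rw [Finset.insert_union, hPQ, Finset.insert_erase he]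
    · rw [Finset.coe_insert, Set.injOn_insert heP]
      refine ⟨hP, fun ⟨f, hf, hfe⟩ => ?_⟩
      exact heP (htail f (Finset.mem_of_mem_erase (hPF hf)) hfe ▸ hf)
  · refine ⟨P, insert e Q, ?_, Finset.disjoint_insert_right.2 ⟨heP, hdisj⟩, hP, ?_⟩
    · rw [Finset.union_insert, hPQ, Finset.insert_erase he]
    · rw [Finset.coe_insert, Set.injOn_insert heQ]
      refine ⟨hQ, fun ⟨f, hf, hfe⟩ => ?_⟩
      exact heQ (hhead f (Finset.mem_of_mem_erase (hQF hf)) hfe ▸ hf)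

end Forest

section Acyclic

variable {D D' : Finset (α × α)}

theorem exists_forall_snd_ne_fst_of_not_hasDirCycle (hD : ¬ HasDirCycle D) (hne : D.Nonempty) :
    ∃ a ∈ D, ∀ b ∈ D, b.2 ≠ a.1 := by
  let r (a b : α × α) : Prop := Relation.TransGen (fun v w => (v, w) ∈ D) a.1 b.1
  have : IsStrictOrder (α × α) r :=
    { irrefl := fun a ha => hD ⟨a.1, ha⟩
      trans := fun _ _ _ => Relation.TransGen.trans }
  obtain ⟨⟨a, ha⟩, -, hmin⟩ :=
    (D.finite_toSet.wellFoundedOn (r := r)).has_min Set.univ ⟨⟨_, hne.choose_spec⟩, trivial⟩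
  exact ⟨a, ha, fun b hb hba => hmin ⟨b, hb⟩ trivial (Relation.TransGen.single (hba ▸ hb))⟩

theorem HasDirCycle.mono (hDD' : D ⊆ D') (hD : HasDirCycle D) : HasDirCycle D' :=
  hD.imp fun v => Relation.TransGen.mono (fun _ _ h => hDD' h) v v

variable [DecidableEq α]

theorem eq_empty_of_inDeg_eq_outDeg (hD : ¬ HasDirCycle D) (h : ∀ v, inDeg D v = outDeg D v) :
    D = ∅ := by
  by_contra hne
  obtain ⟨a, ha, hsource⟩ :=
    exists_forall_snd_ne_fst_of_not_hasDirCycle hD (Finset.nonempty_iff_ne_empty.2 hne)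
  obtain ⟨b, hb, hba⟩ := inDeg_pos.1 (h a.1 ▸ outDeg_pos.2 ⟨a, ha, rfl⟩)
  exact hsource b hb hba

end Acyclic

section Orientation

variable {G : SimpleGraph α} {D D' : Finset (α × α)}

theorem IsOrientation.mem_iff_swap_notMem (hD : IsOrientation G D) {a : α × α}
    (ha : G.Adj a.1 a.2) : a ∈ D ↔ a.swap ∉ D :=
  hD.2 a.1 a.2 ha

theorem IsOrientation.swap_notMem (hD : IsOrientation G D) {a : α × α} (ha : a ∈ D) :
    a.swap ∉ D :=
  (hD.mem_iff_swap_notMem (hD.1 a ha)).1 ha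

variable [DecidableEq α]

theorem IsOrientation.sdiff_eq_reverse_sdiff (hD : IsOrientation G D) (hD' : IsOrientation G D') :
    D' \ D = reverse (D \ D') := by
  ext a
  rw [mem_reverse, Finset.mem_sdiff, Finset.mem_sdiff]
  constructor
  · rintro ⟨haD', haD⟩
    have hadj := hD'.1 a haD'
    exact ⟨not_not.1 (mt (hD.mem_iff_swap_notMem hadj).2 haD), hD'.swap_notMem haD'⟩
  · rintro ⟨haD, haD'⟩
    have hadj := (hD.1 _ haD).symm
    exact ⟨(hD'.mem_iff_swap_notMem hadj).2 haD', hD.swap_notMem haD⟩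

theorem IsOrientation.eq_of_sameDegrees (hD : IsOrientation G D) (hD' : IsOrientation G D')
    (hcyc : ¬ HasDirCycle D) (h : SameDegrees D' D) : D' = D := by
  have hrev := hD.sdiff_eq_reverse_sdiff hD'
  have hbalanced (v : α) : inDeg (D \ D') v = outDeg (D \ D') v := by
    rw [← outDeg_reverse, ← hrev, h.sdiff.outDeg_eq]
  have hempty : D \ D' = ∅ :=
    eq_empty_of_inDeg_eq_outDeg (mt (HasDirCycle.mono Finset.sdiff_subset) hcyc) hbalanced
  rw [hempty, reverse, Finset.map_empty] at hrev
  exact (Finset.sdiff_eq_empty_iff_subset.1 hrev).antisymm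
    (Finset.sdiff_eq_empty_iff_subset.1 hempty)

end Orientation

section Configuration

variable [DecidableEq α] {G : SimpleGraph α} {R B : Finset (α × α)}

/-- A configuration `(R, B)` of `G`: a partition of the arcs of some orientation of `G`, which is
encoded as `R ∪ B`, into red and blue arcs. -/
structure IsConfiguration (G : SimpleGraph α) (R B : Finset (α × α)) : Prop where
  isOrientation : IsOrientation G (R ∪ B)
  disjoint : Disjoint R B

/-- A pair `(R, B)` is recoverable when every configuration of `G` with the same degree function is
equal to it. -/
def IsRecoverable (G : SimpleGraph α) (R B : Finset (α × α)) : Prop :=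
  ∀ ⦃R' B'⦄, IsConfiguration G R' B' → SameDegrees R' R → SameDegrees B' B → R' = R ∧ B' = B

theorem IsConfiguration.reverse_right (h : IsConfiguration G R B) :
    IsConfiguration G R (reverse B) where
  isOrientation := by
    refine ⟨fun a ha => ?_, fun x y hxy => ?_⟩
    · rcases Finset.mem_union.1 ha with haR | haB
      · exact h.isOrientation.1 a (Finset.mem_union_left B haR)
      · exact (h.isOrientation.1 _ (Finset.mem_union_right R (mem_reverse.1 haB))).symm
    · have hor := h.isOrientation.2 x y hxy
      have hdisj (a : α × α) : a ∈ R → a ∉ B := fun ha => Finset.disjoint_left.1 h.disjoint ha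
      have hxy_disj := hdisj (x, y)
      have hyx_disj := hdisj (y, x)
      simp only [Finset.mem_union, mem_reverse, Prod.swap_prod_mk] at hor ⊢
      tauto
  disjoint := Finset.disjoint_left.2 fun _ haR haB =>
    h.isOrientation.swap_notMem (Finset.mem_union_left B haR)
      (Finset.mem_union_right R (mem_reverse.1 haB))

theorem IsRecoverable.reverse_right (h : IsRecoverable G R B) : IsRecoverable G R (reverse B) := by
  intro R' B' hconf hR hB
  have hB' : SameDegrees (reverse B') B := reverse_reverse B ▸ hB.reverse
  obtain ⟨hRR', hBB'⟩ := h hconf.reverse_right hR hB'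
  exact ⟨hRR', by rw [← hBB', reverse_reverse]⟩

theorem IsConfiguration.isRecoverable_of_bernstein (h : IsConfiguration G R B)
    (hB : Bernstein (R ∪ B)) : IsRecoverable G R B := by
  intro R' B' hconf hRdeg hBdeg
  have hunion : R' ∪ B' = R ∪ B := h.isOrientation.eq_of_sameDegrees hconf.isOrientation hB.2.1
    (hRdeg.union hBdeg hconf.disjoint h.disjoint)
  have hforest := hB.isAcyclic_doubleCover
  obtain ⟨hR', hB'⟩ := Finset.union_subset_iff.1 hunion.subset
  exact ⟨hRdeg.eq_of_subset hforest hR' Finset.subset_union_left,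
    hBdeg.eq_of_subset hforest hB' Finset.subset_union_right⟩

end Configuration

/-- Every Bernstein-orientable graph is UFP: it has a recoverable
configuration in which both colour classes have maximum out-degree at
most `1`. -/
theorem stmt5 [DecidableEq α] (G : SimpleGraph α)
    (h : ∃ D : Finset (α × α), IsOrientation G D ∧ Bernstein D) :
    ∃ D R B : Finset (α × α), IsOrientation G D ∧ R ∪ B = D ∧ Disjoint R B ∧
      (∀ v : α, outDeg R v ≤ 1) ∧ (∀ v : α, outDeg B v ≤ 1) ∧
      ∀ D' R' B' : Finset (α × α), IsOrientation G D' → R' ∪ B' = D' →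
        Disjoint R' B' →
        (∀ v : α, outDeg R' v = outDeg R v ∧ inDeg R' v = inDeg R v ∧
          outDeg B' v = outDeg B v ∧ inDeg B' v = inDeg B v) →
        R' = R ∧ B' = B := by
  obtain ⟨D, hGD, hD⟩ := h
  obtain ⟨P, Q, rfl, hPQ, hP, hQ⟩ := exists_union_eq_injOn_fst_injOn_snd hD.isAcyclic_doubleCover
  have hconf : IsConfiguration G P Q := ⟨hGD, hPQ⟩
  have hrec : IsRecoverable G P (reverse Q) := (hconf.isRecoverable_of_bernstein hD).reverse_right
  obtain ⟨hor, hdisj⟩ := hconf.reverse_right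
  refine ⟨_, P, reverse Q, hor, rfl, hdisj, outDeg_le_one_of_injOn_fst hP, fun v => ?_, ?_⟩
  · exact outDeg_reverse Q v ▸ inDeg_le_one_of_injOn_snd hQ v
  · rintro _ R' B' hD' rfl hdisj' hdeg
    exact hrec ⟨hD', hdisj'⟩ ⟨fun v => (hdeg v).1, fun v => (hdeg v).2.1⟩
      ⟨fun v => (hdeg v).2.2.1, fun v => (hdeg v).2.2.2⟩
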